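/- For fixed z in the open unit ball 𝔹 ⊂ ℂⁿ, let s(ζ,z) = (1/2πi)·∂|ζ|²/(|ζ|² − ζ̄·z) and let χ be a cutoff function that is 1 near the closed ball. Then the form g = χ − ∂̄χ ∧ s/∇_η s = χ − ∂̄χ ∧ Σ_{k=1}^n (1/(2πi)^k) ∂|ζ|²∧(∂̄∂|ζ|²)^{k−1}/(|ζ|²−ζ̄·z)^k is well defined (the denominator |ζ|²−ζ̄·z is nonvanishing on supp ∂̄χ for z ∈ 𝔹), has compact support, satisfies ∇_η g = 0 where ∇_η = δ_η − ∂̄, its (0,0)-component satisfies g_{0,0}(z) = 1, and g depends holomorphically on z. -/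

import Mathlib

open Complex Metric

noncomputable section

/-! A coordinate model for the Cauchy-type form `g`.  Forms in `ζ ∈ ℂⁿ` are modeled in
the exterior algebra over `EuclideanSpace ℂ (Fin n) × EuclideanSpace ℂ (Fin n)`: the
first factor carries the holomorphic differentials `dζ_t`, the second the
antiholomorphic differentials `dζ̄_t`. -/

variable (n : ℕ)

/-- The model algebra of forms. -/
abbrev FA := ExteriorAlgebra ℂ (EuclideanSpace ℂ (Fin n) × EuclideanSpace ℂ (Fin n))

/-- The differential `dζ_t`. -/
def dz (t : Fin n) : FA n := ExteriorAlgebra.ι ℂ (EuclideanSpace.single t 1, 0)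

/-- The differential `dζ̄_t`. -/
def dzbar (t : Fin n) : FA n := ExteriorAlgebra.ι ℂ (0, EuclideanSpace.single t 1)

/-- The `t`-th antiholomorphic derivative `∂g/∂ζ̄_t` of a scalar function. -/
def dbarDir (t : Fin n) (g : EuclideanSpace ℂ (Fin n) → ℂ) (ζ : EuclideanSpace ℂ (Fin n)) : ℂ :=
  (fderiv ℝ g ζ (EuclideanSpace.single t 1) + I * fderiv ℝ g ζ (EuclideanSpace.single t I)) / 2

/-- The denominator `|ζ|² − ζ̄·z`. -/
def den (z ζ : EuclideanSpace ℂ (Fin n)) : ℂ :=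
  (∑ t, (starRingEnd ℂ) (ζ t) * ζ t) - ∑ t, (starRingEnd ℂ) (ζ t) * z t

/-- The `(1,0)`-form `∂|ζ|² = ∑_t ζ̄_t dζ_t`. -/
def pBase (ζ : EuclideanSpace ℂ (Fin n)) : FA n := ∑ t, (starRingEnd ℂ) (ζ t) • dz n t

/-- The `(1,1)`-form `∂̄∂|ζ|² = ∑_t dζ̄_t ∧ dζ_t`. -/
def bBase : FA n := ∑ t, dzbar n t * dz n t

/-- `∂̄χ = ∑_t (∂χ/∂ζ̄_t) dζ̄_t`. -/
def dbarChi (χ : EuclideanSpace ℂ (Fin n) → ℝ) (ζ : EuclideanSpace ℂ (Fin n)) : FA n :=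
  ∑ t, dbarDir n t (fun y => (χ y : ℂ)) ζ • dzbar n t

/-- The form `s = (2πi)⁻¹ ∂|ζ|² / (|ζ|² − ζ̄·z)`. -/
def sForm (z ζ : EuclideanSpace ℂ (Fin n)) : FA n :=
  ((2 * Real.pi * I) * den n z ζ)⁻¹ • pBase n ζ

/-- The Cauchy-type form
`g = χ − ∂̄χ ∧ ∑_{k=1}^n (2πi)^{-k} ∂|ζ|² ∧ (∂̄∂|ζ|²)^{k−1} / (|ζ|²−ζ̄·z)^k`. -/
def gForm (χ : EuclideanSpace ℂ (Fin n) → ℝ) (z ζ : EuclideanSpace ℂ (Fin n)) : FA n :=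
  ((χ ζ : ℂ)) • 1 -
    dbarChi n χ ζ *
      ∑ k ∈ Finset.Icc 1 n,
        (((2 * Real.pi * I) ^ k * (den n z ζ) ^ k)⁻¹) • (pBase n ζ * bBase n ^ (k - 1))

/-- Interior multiplication `δ_η` by the vector field `2πi ∑_t (ζ_t − z_t) ∂/∂ζ_t`:
contraction sending `dζ_t` to `2πi (ζ_t − z_t)` and `dζ̄_t` to `0`. -/
def contrEta (z ζ : EuclideanSpace ℂ (Fin n)) : FA n →ₗ[ℂ] FA n :=
  CliffordAlgebra.contractLeft
    (Q := (0 : QuadraticForm ℂ (EuclideanSpace ℂ (Fin n) × EuclideanSpace ℂ (Fin n))))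
    (∑ t, ((2 * Real.pi * I) * (ζ t - z t)) •
      ((EuclideanSpace.proj t).toLinearMap.comp
        (LinearMap.fst ℂ (EuclideanSpace ℂ (Fin n)) (EuclideanSpace ℂ (Fin n)))))

/-- `v` is `∂̄` of the form-valued function `u` on `S`. -/
def IsDbarOn (S : Set (EuclideanSpace ℂ (Fin n)))
    (u v : EuclideanSpace ℂ (Fin n) → FA n) : Prop :=
  ∃ w : Fin n → EuclideanSpace ℂ (Fin n) → FA n,
    (∀ ζ ∈ S, v ζ = ∑ t, dzbar n t * w t ζ) ∧
    ∀ (t : Fin n) (ℓ : FA n →ₗ[ℂ] ℂ), ∀ ζ ∈ S,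
      ℓ (w t ζ) = dbarDir n t (fun y => ℓ (u y)) ζ

/-! The idea is to split `∇_η g = 0` into three facts.
Since `δ_η ∂|ζ|² = 2πi (|ζ|² − ζ̄·z)`, the form `s` satisfies `δ_η s = 1`.  Consequently the terms
`s ∧ (∂̄s)^k` satisfy `∂̄ (s ∧ (∂̄s)^k) = (∂̄s)^{k+1} = δ_η (s ∧ (∂̄s)^{k+1})`, so that
`∇_η (s/∇_η s)` telescopes to `δ_η s = 1`; the series stops because `∂|ζ|² ∧ (∂̄∂|ζ|²)^n` contains
`n + 1` differentials `dζ_t`.  Finally `∂̄∂̄χ = 0` gives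
`∇_η g = -∂̄χ + ∂̄χ ∧ ∇_η (s/∇_η s) = 0`.  Where the denominator may vanish, `χ` is locally constant
and `g = χ`. -/

section ExteriorAlgebra

open ExteriorAlgebra (ι)
open CliffordAlgebra (contractLeft)

variable {R M κ : Type*} [CommRing R] [AddCommGroup M] [Module R M]

lemma ι_mul_ι_eq_neg (x y : M) : ι R x * ι R y = -(ι R y * ι R x) :=
  eq_neg_of_add_eq_zero_left (ExteriorAlgebra.ι_add_mul_swap x y)

lemma commute_ι_mul_ι_ι (x y m : M) : Commute (ι R x * ι R y) (ι R m) := by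
  rw [Commute, SemiconjBy, mul_assoc, ι_mul_ι_eq_neg y m, mul_neg, ← mul_assoc,
    ι_mul_ι_eq_neg x m, neg_mul, neg_neg, mul_assoc]

lemma ι_mul_ι_mul_ι_self (x y : M) : ι R y * (ι R x * ι R y) = 0 := by
  rw [← (commute_ι_mul_ι_ι x y y).eq, mul_assoc, ExteriorAlgebra.ι_sq_zero, mul_zero]

lemma sum_smul_ι_mul_ι_eq_zero_of_symm [Fintype κ] {H : κ → κ → R}
    (hH : ∀ i j, H i j = H j i) (x : κ → M) :
    ∑ i, ∑ j, H i j • (ι R (x j) * ι R (x i)) = 0 := by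
  rw [← Finset.sum_product']
  refine Finset.sum_involution (fun p _ => p.swap) (fun p _ => ?_) (fun p _ hp hswap => hp ?_)
    (fun _ _ => Finset.mem_univ _) (fun _ _ => Prod.swap_swap _)
  · rw [Prod.fst_swap, Prod.snd_swap, hH p.2 p.1, ← smul_add, ExteriorAlgebra.ι_add_mul_swap,
      smul_zero]
  · have hdiag : p.2 = p.1 := congrArg Prod.fst hswap
    rw [hdiag, ExteriorAlgebra.ι_sq_zero, smul_zero]

/-- The two-vector `∑_{i ∈ s} x_i ∧ y_i`, the shape shared by `∂̄∂|ζ|²` and its partial sums. -/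
def wedgeSum (s : Finset κ) (x y : κ → M) : ExteriorAlgebra R M :=
  ∑ i ∈ s, ι R (x i) * ι R (y i)

lemma commute_wedgeSum_ι (s : Finset κ) (x y : κ → M) (m : M) :
    Commute (wedgeSum (R := R) s x y) (ι R m) :=
  Commute.sum_left _ _ _ fun i _ => commute_ι_mul_ι_ι (x i) (y i) m

lemma commute_ι_mul_ι_wedgeSum (a b : M) (s : Finset κ) (x y : κ → M) :
    Commute (ι R a * ι R b) (wedgeSum s x y) :=
  ((commute_wedgeSum_ι s x y a).mul_right (commute_wedgeSum_ι s x y b)).symm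

lemma wedgeSum_pow_card_succ (s : Finset κ) (x y : κ → M) :
    wedgeSum (R := R) s x y ^ (s.card + 1) = 0 := by
  classical
  induction s using Finset.induction_on with
  | empty => simp [wedgeSum]
  | insert i s hi ih =>
    rw [wedgeSum, Finset.sum_insert hi, Finset.card_insert_of_notMem hi]
    have hsq : (ι R (x i) * ι R (y i)) ^ 2 = 0 := by
      rw [pow_two, mul_assoc, ι_mul_ι_mul_ι_self, mul_zero]
    exact (commute_ι_mul_ι_wedgeSum (x i) (y i) s x y).add_pow_eq_zero_of_add_le_succ_of_pow_eq_zero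
      hsq ih (by omega)

lemma ι_mul_wedgeSum_pow_card {s : Finset κ} {i : κ} (hi : i ∈ s) (x y : κ → M) :
    ι R (y i) * wedgeSum s x y ^ s.card = 0 := by
  classical
  set rest : ExteriorAlgebra R M := wedgeSum (s.erase i) x y
  have hsplit : wedgeSum s x y - rest = ι R (x i) * ι R (y i) :=
    sub_eq_of_eq_add (Finset.add_sum_erase s _ hi).symm
  have hcomm : Commute (wedgeSum s x y) rest :=
    Commute.sum_right _ _ _ fun j _ => (commute_ι_mul_ι_wedgeSum (x j) (y j) s x y).symm
  have hrest : rest ^ s.card = 0 := by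
    rw [← Finset.card_erase_add_one hi]
    exact wedgeSum_pow_card_succ (s.erase i) x y
  obtain ⟨c, hc⟩ := hcomm.sub_dvd_pow_sub_pow s.card
  rw [hrest, sub_zero, hsplit] at hc
  rw [hc, ← mul_assoc, ι_mul_ι_mul_ι_self, zero_mul]

-- Restated because `rw` does not see `ExteriorAlgebra.ι` as a `CliffordAlgebra.ι`.
lemma contractLeft_ι_mul (d : Module.Dual R M) (x : M) (a : ExteriorAlgebra R M) :
    contractLeft d (ι R x * a) = d x • a - ι R x * contractLeft d a :=
  CliffordAlgebra.contractLeft_ι_mul d x a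

lemma contractLeft_wedgeSum_mul (d : Module.Dual R M) (s : Finset κ) (x y : κ → M)
    (a : ExteriorAlgebra R M) :
    contractLeft d (wedgeSum s x y * a) =
      ι R (∑ i ∈ s, (d (x i) • y i - d (y i) • x i)) * a + wedgeSum s x y * contractLeft d a := by
  simp only [wedgeSum, Finset.sum_mul, map_sum, ← Finset.sum_add_distrib]
  refine Finset.sum_congr rfl fun i _ => ?_
  rw [mul_assoc, contractLeft_ι_mul, contractLeft_ι_mul, map_sub, map_smul, map_smul, sub_mul,
    smul_mul_assoc, smul_mul_assoc, mul_sub, mul_smul_comm, mul_assoc]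
  abel

lemma contractLeft_wedgeSum_pow_succ (d : Module.Dual R M) (s : Finset κ) (x y : κ → M) (k : ℕ) :
    contractLeft d (wedgeSum s x y ^ (k + 1)) =
      ((k + 1 : ℕ) : R) •
        (ι R (∑ i ∈ s, (d (x i) • y i - d (y i) • x i)) * wedgeSum s x y ^ k) := by
  induction k with
  | zero =>
    rw [pow_succ', contractLeft_wedgeSum_mul, pow_zero, CliffordAlgebra.contractLeft_one]
    simp
  | succ k ih =>
    rw [pow_succ', contractLeft_wedgeSum_mul, ih, mul_smul_comm, ← mul_assoc (wedgeSum s x y),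
      (commute_wedgeSum_ι s x y _).eq, mul_assoc, ← pow_succ', Nat.cast_succ (k + 1), add_smul,
      one_smul, add_comm]

end ExteriorAlgebra

section Forms

open ExteriorAlgebra (ι)
open CliffordAlgebra (contractLeft)

variable {n}

local notation:max "ℂ^" n:max => EuclideanSpace ℂ (Fin n)

/-- The `(1,0)`-form `∑_t a_t dζ_t` with coefficient vector `a`, linear in `a`. -/
def holForm : (Fin n → ℂ) →ₗ[ℂ] FA n :=
  ι ℂ ∘ₗ LinearMap.inl ℂ ℂ^n ℂ^n ∘ₗ (WithLp.linearEquiv 2 ℂ (Fin n → ℂ)).symm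

/-- The `(0,1)`-form `∑_t a_t dζ̄_t` with coefficient vector `a`, linear in `a`. -/
def antiholForm : (Fin n → ℂ) →ₗ[ℂ] FA n :=
  ι ℂ ∘ₗ LinearMap.inr ℂ ℂ^n ℂ^n ∘ₗ (WithLp.linearEquiv 2 ℂ (Fin n → ℂ)).symm

lemma holForm_apply (a : Fin n → ℂ) : holForm a = ι ℂ ((WithLp.toLp 2 a, 0) : ℂ^n × ℂ^n) := rfl

lemma antiholForm_apply (a : Fin n → ℂ) :
    antiholForm a = ι ℂ ((0, WithLp.toLp 2 a) : ℂ^n × ℂ^n) := rfl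

lemma holForm_eq_sum (a : Fin n → ℂ) : holForm a = ∑ t, a t • dz n t := by
  conv_lhs => rw [pi_eq_sum_univ' a, map_sum]
  exact Finset.sum_congr rfl fun t _ => map_smul holForm (a t) (Pi.single t 1)

lemma antiholForm_eq_sum (a : Fin n → ℂ) : antiholForm a = ∑ t, a t • dzbar n t := by
  conv_lhs => rw [pi_eq_sum_univ' a, map_sum]
  exact Finset.sum_congr rfl fun t _ => map_smul antiholForm (a t) (Pi.single t 1)

lemma antiholForm_mul_holForm (a b : Fin n → ℂ) :
    antiholForm a * holForm b = -(holForm b * antiholForm a) :=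
  ι_mul_ι_eq_neg _ _

lemma pBase_eq_holForm (ζ : ℂ^n) : pBase n ζ = holForm fun t => (starRingEnd ℂ) (ζ t) :=
  (holForm_eq_sum _).symm

lemma bBase_eq_wedgeSum :
    bBase n = wedgeSum Finset.univ (fun t => ((0, EuclideanSpace.single t 1) : ℂ^n × ℂ^n))
      (fun t => (EuclideanSpace.single t 1, 0)) := rfl

lemma dbarChi_eq_antiholForm (χ : ℂ^n → ℝ) (ζ : ℂ^n) :
    dbarChi n χ ζ = antiholForm fun t => dbarDir n t (fun y => (χ y : ℂ)) ζ :=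
  (antiholForm_eq_sum _).symm

lemma pBase_mul_bBase_pow (ζ : ℂ^n) : pBase n ζ * bBase n ^ n = 0 := by
  rw [pBase, Finset.sum_mul]
  refine Finset.sum_eq_zero fun t _ => ?_
  have h : dz n t * bBase n ^ (Finset.univ : Finset (Fin n)).card = 0 :=
    ι_mul_wedgeSum_pow_card (Finset.mem_univ t) _ _
  rw [Finset.card_fin] at h
  rw [smul_mul_assoc, h, smul_zero]

/-- The linear functional on covectors given by the vector field `η`, so that `δ_η` is contraction
with `etaDual z ζ` at the point `ζ`. -/
def etaDual (z ζ : ℂ^n) : Module.Dual ℂ (ℂ^n × ℂ^n) :=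
  ∑ t, ((2 * Real.pi * I) * (ζ t - z t)) •
    ((EuclideanSpace.proj t).toLinearMap.comp (LinearMap.fst ℂ ℂ^n ℂ^n))

lemma contrEta_eq_contractLeft (z ζ : ℂ^n) : contrEta n z ζ = contractLeft (etaDual z ζ) := rfl

lemma etaDual_apply (z ζ : ℂ^n) (m : ℂ^n × ℂ^n) :
    etaDual z ζ m = 2 * Real.pi * I * ∑ t, (ζ t - z t) * m.1 t := by
  simp [etaDual, Finset.mul_sum, mul_assoc]

lemma contrEta_one (z ζ : ℂ^n) : contrEta n z ζ 1 = 0 :=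
  CliffordAlgebra.contractLeft_one _ _

lemma contrEta_pBase_mul (z ζ : ℂ^n) (a : FA n) :
    contrEta n z ζ (pBase n ζ * a) =
      (2 * Real.pi * I * den n z ζ) • a - pBase n ζ * contrEta n z ζ a := by
  rw [pBase_eq_holForm, contrEta_eq_contractLeft, holForm_apply, contractLeft_ι_mul, etaDual_apply]
  congr 3
  rw [den, ← Finset.sum_sub_distrib]
  exact Finset.sum_congr rfl fun t _ => by ring

lemma contrEta_antiholForm_mul (z ζ : ℂ^n) (a : Fin n → ℂ) (b : FA n) :
    contrEta n z ζ (antiholForm a * b) = -(antiholForm a * contrEta n z ζ b) := by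
  rw [contrEta_eq_contractLeft, antiholForm_apply, contractLeft_ι_mul, etaDual_apply]
  simp

lemma contrEta_bBase_pow_succ (z ζ : ℂ^n) (k : ℕ) :
    contrEta n z ζ (bBase n ^ (k + 1)) =
      -(((k + 1) * (2 * Real.pi * I) : ℂ) •
        (antiholForm (fun t => ζ t - z t) * bBase n ^ k)) := by
  have hη : ∑ t, (etaDual z ζ (0, EuclideanSpace.single t 1) •
        ((EuclideanSpace.single t 1, 0) : ℂ^n × ℂ^n) -
      etaDual z ζ (EuclideanSpace.single t 1, 0) • (0, EuclideanSpace.single t 1)) =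
      -((2 * Real.pi * I) • (0, WithLp.toLp 2 fun t => ζ t - z t) : ℂ^n × ℂ^n) := by
    ext s <;> simp [etaDual_apply, Prod.fst_sum, Prod.snd_sum, Pi.single_apply]
  rw [contrEta_eq_contractLeft, bBase_eq_wedgeSum, contractLeft_wedgeSum_pow_succ, hη, map_neg,
    map_smul, ← antiholForm_apply, neg_mul, smul_mul_assoc, smul_neg, smul_smul]
  push_cast
  rfl

/-- `f` is real differentiable at `ζ` with antiholomorphic partial derivatives `∂f/∂ζ̄_t = a_t`. -/
def HasDbarDerivAt (f : ℂ^n → ℂ) (a : Fin n → ℂ) (ζ : ℂ^n) : Prop :=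
  DifferentiableAt ℝ f ζ ∧ ∀ t, dbarDir n t f ζ = a t

namespace HasDbarDerivAt

variable {f g : ℂ^n → ℂ} {a b : Fin n → ℂ} {ζ : ℂ^n}

lemma const (c : ℂ) (ζ : ℂ^n) : HasDbarDerivAt (fun _ => c) 0 ζ :=
  ⟨differentiableAt_const c, fun t => by simp [dbarDir]⟩

lemma add (hf : HasDbarDerivAt f a ζ) (hg : HasDbarDerivAt g b ζ) :
    HasDbarDerivAt (fun y => f y + g y) (a + b) ζ := by
  refine ⟨hf.1.add hg.1, fun t => ?_⟩
  rw [Pi.add_apply, ← hf.2 t, ← hg.2 t, dbarDir, dbarDir, dbarDir, fderiv_fun_add hf.1 hg.1]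
  simp only [_root_.add_apply]
  ring

lemma mul (hf : HasDbarDerivAt f a ζ) (hg : HasDbarDerivAt g b ζ) :
    HasDbarDerivAt (fun y => f y * g y) (g ζ • a + f ζ • b) ζ := by
  refine ⟨hf.1.mul hg.1, fun t => ?_⟩
  rw [Pi.add_apply, Pi.smul_apply, Pi.smul_apply, ← hf.2 t, ← hg.2 t, dbarDir, dbarDir, dbarDir,
    fderiv_fun_mul hf.1 hg.1]
  simp only [_root_.add_apply, _root_.smul_apply, smul_eq_mul]
  ring

lemma comp {h : ℂ → ℂ} {h' : ℂ} (hh : HasDerivAt h h' (f ζ)) (hf : HasDbarDerivAt f a ζ) :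
    HasDbarDerivAt (fun y => h (f y)) (h' • a) ζ := by
  have hcomp : HasFDerivAt (fun y => h (f y)) _ ζ :=
    (hh.hasFDerivAt.restrictScalars ℝ).comp ζ hf.1.hasFDerivAt
  refine ⟨hcomp.differentiableAt, fun t => ?_⟩
  rw [Pi.smul_apply, ← hf.2 t, dbarDir, dbarDir, hcomp.fderiv]
  simp only [ContinuousLinearMap.comp_apply, ContinuousLinearMap.coe_restrictScalars', smul_eq_mul,
    ContinuousLinearMap.toSpanSingleton_apply]
  ring

lemma congr_of_eventuallyEq (hf : HasDbarDerivAt f a ζ) (h : g =ᶠ[nhds ζ] f) :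
    HasDbarDerivAt g a ζ :=
  ⟨hf.1.congr_of_eventuallyEq h, fun t => by rw [← hf.2 t, dbarDir, dbarDir, h.fderiv_eq]⟩

end HasDbarDerivAt

lemma hasDbarDerivAt_inner {G : ℂ^n → ℂ^n} {ζ : ℂ^n} (hG : DifferentiableAt ℂ G ζ) :
    HasDbarDerivAt (fun y => inner ℂ y (G y)) (G ζ) ζ := by
  have h : HasFDerivAt (fun y => inner ℂ y (G y)) _ ζ :=
    (hasFDerivAt_id (𝕜 := ℝ) ζ).inner ℂ (hG.hasFDerivAt.restrictScalars ℝ)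
  refine ⟨h.differentiableAt, fun t => ?_⟩
  have hI : (EuclideanSpace.single t I : ℂ^n) = I • EuclideanSpace.single t 1 := by
    ext s
    simp
  rw [dbarDir, h.fderiv, hI]
  simp only [id_eq, ContinuousLinearMap.comp_apply, ContinuousLinearMap.prod_apply,
    ContinuousLinearMap.id_apply, ContinuousLinearMap.coe_restrictScalars', fderivInnerCLM_apply,
    EuclideanSpace.inner_single_left, map_one, one_mul, map_smul, inner_smul_right, inner_smul_left,
    conj_I, neg_mul]
  linear_combination (inner ℂ ζ (fderiv ℂ G ζ (EuclideanSpace.single t 1)) - G ζ t) / 2 * I_mul_I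

lemma den_eq_inner (z ζ : ℂ^n) : den n z ζ = inner ℂ ζ (ζ - z) := by
  simp only [den, inner_sub_right, PiLp.inner_apply, RCLike.inner_apply, mul_comm]

lemma den_ne_zero_of_norm_lt {z ζ : ℂ^n} (h : ‖z‖ < ‖ζ‖) : den n z ζ ≠ 0 := by
  rw [den_eq_inner, inner_sub_right, sub_ne_zero]
  intro heq
  have hle : ‖ζ‖ * ‖ζ‖ ≤ ‖ζ‖ * ‖z‖ := by
    rw [← inner_self_eq_norm_mul_norm (𝕜 := ℂ), heq]
    exact re_inner_le_norm ζ z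
  exact hle.not_gt (mul_lt_mul_of_pos_left h ((norm_nonneg z).trans_lt h))

lemma hasDbarDerivAt_den (z ζ : ℂ^n) : HasDbarDerivAt (den n z) (fun t => ζ t - z t) ζ := by
  rw [funext (den_eq_inner z)]
  exact hasDbarDerivAt_inner (differentiableAt_id.sub_const z)

lemma hasDbarDerivAt_conj_apply (t : Fin n) (ζ : ℂ^n) :
    HasDbarDerivAt (fun y => (starRingEnd ℂ) (y t)) (Pi.single t 1) ζ := by
  simpa [EuclideanSpace.inner_single_right] using
    hasDbarDerivAt_inner (ζ := ζ) (differentiableAt_const (EuclideanSpace.single t (1 : ℂ)))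

lemma hasFDerivAt_dbarDir {f : ℂ^n → ℂ} {ζ : ℂ^n} (hf : ContDiffAt ℝ 2 f ζ) (t : Fin n) :
    HasFDerivAt (dbarDir n t f)
      ((2 : ℂ)⁻¹ • ((fderiv ℝ (fderiv ℝ f) ζ).flip (EuclideanSpace.single t 1) +
        I • (fderiv ℝ (fderiv ℝ f) ζ).flip (EuclideanSpace.single t I))) ζ := by
  have hdir (v : ℂ^n) : HasFDerivAt (fun y => fderiv ℝ f y v)
      ((fderiv ℝ (fderiv ℝ f) ζ).flip v) ζ :=
    (ContinuousLinearMap.apply ℝ ℂ v).hasFDerivAt.comp ζ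
      ((hf.fderiv_right (m := 1) le_rfl).differentiableAt one_ne_zero).hasFDerivAt
  refine (((hdir _).add ((hdir _).const_smul I)).const_smul (2 : ℂ)⁻¹).congr_of_eventuallyEq
    (Filter.Eventually.of_forall fun y => ?_)
  simp [dbarDir, div_eq_inv_mul]

lemma dbarDir_comm {f : ℂ^n → ℂ} {ζ : ℂ^n} (hf : ContDiffAt ℝ 2 f ζ) (s t : Fin n) :
    dbarDir n t (dbarDir n s f) ζ = dbarDir n s (dbarDir n t f) ζ := by
  have hsymm : IsSymmSndFDerivAt ℝ f ζ := hf.isSymmSndFDerivAt (by simp)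
  rw [dbarDir, dbarDir, (hasFDerivAt_dbarDir hf s).fderiv, (hasFDerivAt_dbarDir hf t).fderiv]
  simp only [_root_.smul_apply, _root_.add_apply, ContinuousLinearMap.flip_apply, smul_eq_mul]
  rw [hsymm (EuclideanSpace.single t 1) (EuclideanSpace.single s 1),
    hsymm (EuclideanSpace.single t 1) (EuclideanSpace.single s I),
    hsymm (EuclideanSpace.single t I) (EuclideanSpace.single s 1),
    hsymm (EuclideanSpace.single t I) (EuclideanSpace.single s I)]
  ring

lemma hasDbarDerivAt_dbarDir {f : ℂ^n → ℂ} {ζ : ℂ^n} (hf : ContDiffAt ℝ 2 f ζ) (t : Fin n) :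
    HasDbarDerivAt (dbarDir n t f) (fun s => dbarDir n s (dbarDir n t f) ζ) ζ :=
  ⟨(hasFDerivAt_dbarDir hf t).differentiableAt, fun _ => rfl⟩

/-- `v` is the value at `ζ` of `∂̄u`, for a form-valued function `u` that is real differentiable at
`ζ`; the pointwise counterpart of `IsDbarOn`.  As `FA n` carries no topology, derivatives of `u` are
taken after applying an arbitrary linear functional. -/
def HasDbarAt (u : ℂ^n → FA n) (v : FA n) (ζ : ℂ^n) : Prop :=
  ∃ w : Fin n → FA n, v = ∑ t, dzbar n t * w t ∧
    ∀ ℓ : FA n →ₗ[ℂ] ℂ, HasDbarDerivAt (fun y => ℓ (u y)) (fun t => ℓ (w t)) ζ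

lemma IsDbarOn.eq_of_hasDbarAt {S : Set ℂ^n} {u v : ℂ^n → FA n} {v' : FA n} {ζ : ℂ^n}
    (h : IsDbarOn n S u v) (hζ : ζ ∈ S) (hu : HasDbarAt u v' ζ) : v ζ = v' := by
  obtain ⟨w, hv, hw⟩ := h
  obtain ⟨w', rfl, hw'⟩ := hu
  rw [hv ζ hζ]
  refine Finset.sum_congr rfl fun t _ => congrArg _ ?_
  rw [← sub_eq_zero, ← Module.forall_dual_apply_eq_zero_iff ℂ]
  intro ℓ
  rw [map_sub, hw t ℓ ζ hζ, (hw' ℓ).2 t, sub_self]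

namespace HasDbarAt

variable {u v : ℂ^n → FA n} {u' v' : FA n} {ζ : ℂ^n}

lemma const (c : FA n) (ζ : ℂ^n) : HasDbarAt (fun _ => c) 0 ζ :=
  ⟨0, by simp, fun ℓ => by simpa using! HasDbarDerivAt.const (ℓ c) ζ⟩

lemma congr_of_eventuallyEq (hu : HasDbarAt u u' ζ) (h : v =ᶠ[nhds ζ] u) : HasDbarAt v u' ζ := by
  obtain ⟨w, hw, hd⟩ := hu
  exact ⟨w, hw, fun ℓ => (hd ℓ).congr_of_eventuallyEq (h.fun_comp ℓ)⟩

lemma add (hu : HasDbarAt u u' ζ) (hv : HasDbarAt v v' ζ) :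
    HasDbarAt (fun y => u y + v y) (u' + v') ζ := by
  obtain ⟨w, rfl, hw⟩ := hu
  obtain ⟨x, rfl, hx⟩ := hv
  refine ⟨w + x, by simp [mul_add, Finset.sum_add_distrib], fun ℓ => ?_⟩
  simpa using! (hw ℓ).add (hx ℓ)

lemma sum {κ : Type*} {u : κ → ℂ^n → FA n} {u' : κ → FA n} {s : Finset κ}
    (h : ∀ i ∈ s, HasDbarAt (u i) (u' i) ζ) :
    HasDbarAt (fun y => ∑ i ∈ s, u i y) (∑ i ∈ s, u' i) ζ := by
  classical
  induction s using Finset.induction_on with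
  | empty => simpa using const (0 : FA n) ζ
  | insert i s hi ih =>
    simp only [Finset.sum_insert hi]
    exact (h i (Finset.mem_insert_self i s)).add
      (ih fun j hj => h j (Finset.mem_insert_of_mem hj))

lemma smul {f : ℂ^n → ℂ} {a : Fin n → ℂ} (hf : HasDbarDerivAt f a ζ) (hu : HasDbarAt u u' ζ) :
    HasDbarAt (fun y => f y • u y) (antiholForm a * u ζ + f ζ • u') ζ := by
  obtain ⟨w, rfl, hw⟩ := hu
  refine ⟨fun t => a t • u ζ + f ζ • w t, ?_, fun ℓ => ?_⟩
  · simp [antiholForm_eq_sum, Finset.sum_mul, Finset.smul_sum, mul_add, Finset.sum_add_distrib]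
  · simpa [mul_comm, Pi.add_def] using! hf.mul (hw ℓ)

lemma mul_const (hu : HasDbarAt u u' ζ) (c : FA n) : HasDbarAt (fun y => u y * c) (u' * c) ζ := by
  obtain ⟨w, rfl, hw⟩ := hu
  exact ⟨fun t => w t * c, by simp only [Finset.sum_mul, mul_assoc],
    fun ℓ => hw (ℓ ∘ₗ LinearMap.mulRight ℂ c)⟩

lemma ι_mul (m : ℂ^n × ℂ^n) (hu : HasDbarAt u u' ζ) :
    HasDbarAt (fun y => ι ℂ m * u y) (-(ι ℂ m * u')) ζ := by
  obtain ⟨w, rfl, hw⟩ := hu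
  refine ⟨fun t => ι ℂ m * w t, ?_, fun ℓ => hw (ℓ ∘ₗ LinearMap.mulLeft ℂ (ι ℂ m))⟩
  rw [Finset.mul_sum, ← Finset.sum_neg_distrib]
  refine Finset.sum_congr rfl fun t _ => ?_
  rw [← mul_assoc, ← mul_assoc, dzbar, ι_mul_ι_eq_neg, neg_mul, neg_neg]

lemma neg (hu : HasDbarAt u u' ζ) : HasDbarAt (fun y => -u y) (-u') ζ := by
  simpa using hu.mul_const (-1)

lemma antiholForm_dbarDir_mul {f : ℂ^n → ℂ} (hf : ContDiffAt ℝ 2 f ζ) (hu : HasDbarAt u u' ζ) :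
    HasDbarAt (fun y => antiholForm (fun t => dbarDir n t f y) * u y)
      (-(antiholForm (fun t => dbarDir n t f ζ) * u')) ζ := by
  have hterm := sum (s := Finset.univ) fun t _ =>
    smul (hasDbarDerivAt_dbarDir hf t) (hu.ι_mul (0, EuclideanSpace.single t 1))
  have hdd : ∑ t, antiholForm (fun s => dbarDir n s (dbarDir n t f) ζ) * dzbar n t = 0 := by
    simp only [antiholForm_eq_sum, Finset.sum_mul, smul_mul_assoc]
    exact sum_smul_ι_mul_ι_eq_zero_of_symm (fun t s => dbarDir_comm hf t s) _
  convert hterm using 1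
  · funext y
    simp [antiholForm_eq_sum, Finset.sum_mul, dzbar]
  · change _ = ∑ t, (_ * (dzbar n t * u ζ) + _ • -(dzbar n t * u'))
    simp only [Finset.sum_add_distrib, ← mul_assoc, ← Finset.sum_mul, hdd, zero_mul, zero_add]
    simp [antiholForm_eq_sum, Finset.sum_mul]

end HasDbarAt

lemma hasDbarAt_pBase (ζ : ℂ^n) : HasDbarAt (pBase n) (bBase n) ζ := by
  have h := HasDbarAt.sum (s := Finset.univ) fun t _ =>
    HasDbarAt.smul (hasDbarDerivAt_conj_apply t ζ) (HasDbarAt.const (dz n t) ζ)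
  simp only [smul_zero, add_zero] at h
  exact h

/-- The term `s ∧ (∂̄s)^k` of the expansion of `s/∇_η s`. -/
def sTerm (z ζ : ℂ^n) (k : ℕ) : FA n :=
  (2 * Real.pi * I * den n z ζ)⁻¹ ^ (k + 1) • (pBase n ζ * bBase n ^ k)

/-- The form `s/∇_η s = ∑_k s ∧ (∂̄s)^k`, which has only `n` nonzero terms. -/
def sDivNabla (z ζ : ℂ^n) : FA n := ∑ k ∈ Finset.range n, sTerm z ζ k

lemma sTerm_zero (z ζ : ℂ^n) : sTerm z ζ 0 = sForm n z ζ := by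
  simp [sTerm, sForm]

lemma sTerm_self (z ζ : ℂ^n) : sTerm z ζ n = 0 := by
  rw [sTerm, pBase_mul_bBase_pow, smul_zero]

lemma gForm_eq (χ : ℂ^n → ℝ) (z ζ : ℂ^n) :
    gForm n χ z ζ = (χ ζ : ℂ) • 1 - dbarChi n χ ζ * sDivNabla z ζ := by
  rw [gForm, sDivNabla, ← Finset.Ico_add_one_right_eq_Icc, Finset.sum_Ico_eq_sum_range]
  simp only [sTerm, ← mul_pow, inv_pow, Nat.add_sub_cancel, add_comm 1]

lemma contrEta_sForm {z ζ : ℂ^n} (hd : den n z ζ ≠ 0) : contrEta n z ζ (sForm n z ζ) = 1 := by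
  have h := contrEta_pBase_mul z ζ 1
  rw [mul_one, contrEta_one, mul_zero, sub_zero] at h
  rw [sForm, map_smul, h, inv_smul_smul₀ (mul_ne_zero two_pi_I_ne_zero hd)]

lemma contrEta_sTerm_succ {z ζ : ℂ^n} (hd : den n z ζ ≠ 0) (k : ℕ) :
    contrEta n z ζ (sTerm z ζ (k + 1)) =
      (2 * Real.pi * I * den n z ζ)⁻¹ ^ (k + 1) • bBase n ^ (k + 1) +
        ((k + 1) * (2 * Real.pi * I) * (2 * Real.pi * I * den n z ζ)⁻¹ ^ (k + 2)) •
          (pBase n ζ * (antiholForm (fun t => ζ t - z t) * bBase n ^ k)) := by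
  have hcd : 2 * Real.pi * I * den n z ζ ≠ 0 := mul_ne_zero two_pi_I_ne_zero hd
  rw [sTerm, map_smul, contrEta_pBase_mul, contrEta_bBase_pow_succ, mul_neg, sub_neg_eq_add,
    smul_add, smul_smul, mul_smul_comm, smul_smul, pow_succ _ (k + 1), mul_assoc,
    inv_mul_cancel₀ hcd, mul_one, mul_comm (_ * _⁻¹)]

lemma hasDbarDerivAt_inv_den_pow {z ζ : ℂ^n} (hd : den n z ζ ≠ 0) (k : ℕ) :
    HasDbarDerivAt (fun y => (2 * Real.pi * I * den n z y)⁻¹ ^ (k + 1))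
      (-((k + 1) * (2 * Real.pi * I) * (2 * Real.pi * I * den n z ζ)⁻¹ ^ (k + 2)) •
        fun t => ζ t - z t) ζ := by
  have hcd : 2 * Real.pi * I * den n z ζ ≠ 0 := mul_ne_zero two_pi_I_ne_zero hd
  have hpow : HasDerivAt (fun x : ℂ => (2 * Real.pi * I * x)⁻¹ ^ (k + 1))
      (-((k + 1) * (2 * Real.pi * I) * (2 * Real.pi * I * den n z ζ)⁻¹ ^ (k + 2)))
      (den n z ζ) := by
    convert! (((hasDerivAt_id (den n z ζ)).const_mul (2 * Real.pi * I)).inv hcd).pow (k + 1) using 1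
    simp only [Pi.inv_apply, id, Nat.add_sub_cancel, mul_one, div_eq_mul_inv]
    push_cast
    ring
  exact HasDbarDerivAt.comp hpow (hasDbarDerivAt_den z ζ)

lemma hasDbarAt_sTerm {z ζ : ℂ^n} (hd : den n z ζ ≠ 0) (k : ℕ) :
    HasDbarAt (fun y => sTerm z y k) (contrEta n z ζ (sTerm z ζ (k + 1))) ζ := by
  have h := HasDbarAt.smul (hasDbarDerivAt_inv_den_pow hd k)
    ((hasDbarAt_pBase ζ).mul_const (bBase n ^ k))
  have hanti : antiholForm (fun t => ζ t - z t) * (pBase n ζ * bBase n ^ k) =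
      -(pBase n ζ * (antiholForm (fun t => ζ t - z t) * bBase n ^ k)) := by
    rw [pBase_eq_holForm, ← mul_assoc, antiholForm_mul_holForm, neg_mul, mul_assoc]
  rwa [map_smul, smul_mul_assoc, hanti, neg_smul_neg, ← pow_succ',
    add_comm (_ • (pBase n ζ * _)), ← contrEta_sTerm_succ hd] at h

lemma hasDbarAt_sDivNabla {z ζ : ℂ^n} (hd : den n z ζ ≠ 0) :
    HasDbarAt (sDivNabla z) (contrEta n z ζ (sDivNabla z ζ) - 1) ζ := by
  have htele : ∑ k ∈ Finset.range n, contrEta n z ζ (sTerm z ζ (k + 1)) =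
      contrEta n z ζ (sDivNabla z ζ) - 1 := by
    have h := Finset.sum_range_succ' (fun k => contrEta n z ζ (sTerm z ζ k)) n
    rw [Finset.sum_range_succ, sTerm_self, map_zero, add_zero, sTerm_zero, contrEta_sForm hd,
      ← map_sum] at h
    exact eq_sub_of_add_eq h.symm
  rw [← htele]
  exact HasDbarAt.sum fun k _ => hasDbarAt_sTerm hd k

lemma hasDbarAt_gForm_of_den_ne_zero {χ : ℂ^n → ℝ} {z ζ : ℂ^n} (hχ : ContDiffAt ℝ 2 χ ζ)
    (hd : den n z ζ ≠ 0) : HasDbarAt (gForm n χ z) (contrEta n z ζ (gForm n χ z ζ)) ζ := by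
  have hχℂ : ContDiffAt ℝ 2 (fun y => (χ y : ℂ)) ζ := ofRealCLM.contDiff.contDiffAt.comp ζ hχ
  have hsmul := HasDbarAt.smul ⟨hχℂ.differentiableAt two_ne_zero, fun _ => rfl⟩
    (HasDbarAt.const (1 : FA n) ζ)
  have h := hsmul.add ((hasDbarAt_sDivNabla hd).antiholForm_dbarDir_mul hχℂ).neg
  convert h using 1
  · funext y
    rw [gForm_eq, dbarChi_eq_antiholForm, sub_eq_add_neg]
  · rw [gForm_eq, map_sub, map_smul, contrEta_one, dbarChi_eq_antiholForm,
      contrEta_antiholForm_mul]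
    simp [mul_sub]

lemma dbarChi_eq_zero_of_eventuallyEq_const {χ : ℂ^n → ℝ} {ζ : ℂ^n} {c : ℝ}
    (h : ∀ᶠ y in nhds ζ, χ y = c) : dbarChi n χ ζ = 0 := by
  have hχ := (HasDbarDerivAt.const (c : ℂ) ζ).congr_of_eventuallyEq
    (h.mono fun y hy => congrArg ofReal hy)
  rw [dbarChi_eq_antiholForm, funext hχ.2]
  exact map_zero _

lemma gForm_eq_of_eventuallyEq_const {χ : ℂ^n → ℝ} {ζ : ℂ^n} {c : ℝ}
    (h : ∀ᶠ y in nhds ζ, χ y = c) (z : ℂ^n) : gForm n χ z ζ = (c : ℂ) • 1 := by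
  rw [gForm_eq, dbarChi_eq_zero_of_eventuallyEq_const h, h.self_of_nhds, zero_mul, sub_zero]

lemma hasDbarAt_gForm_of_eventuallyEq_const {χ : ℂ^n → ℝ} {ζ : ℂ^n} {c : ℝ}
    (h : ∀ᶠ y in nhds ζ, χ y = c) (z : ℂ^n) :
    HasDbarAt (gForm n χ z) (contrEta n z ζ (gForm n χ z ζ)) ζ := by
  rw [gForm_eq_of_eventuallyEq_const h, map_smul, contrEta_one, smul_zero]
  exact (HasDbarAt.const _ ζ).congr_of_eventuallyEq
    (h.eventually_nhds.mono fun y hy => gForm_eq_of_eventuallyEq_const hy z)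

lemma hasCompactSupport_gForm {χ : ℂ^n → ℝ} (hχ : HasCompactSupport χ) (z : ℂ^n) :
    HasCompactSupport (gForm n χ z) :=
  HasCompactSupport.intro hχ fun ζ hζ => by
    have h0 : ∀ᶠ y in nhds ζ, χ y = 0 := notMem_tsupport_iff_eventuallyEq.1 hζ
    rw [gForm_eq_of_eventuallyEq_const h0, ofReal_zero, zero_smul]

lemma analyticAt_den (z ζ : ℂ^n) : AnalyticAt ℂ (fun w => den n w ζ) z := by
  simp only [den_eq_inner]
  have hsub : AnalyticAt ℂ (fun w => ζ - w) z := analyticAt_const.sub analyticAt_id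
  exact ((innerSL ℂ ζ).analyticAt (ζ - z)).fun_comp hsub

lemma analyticAt_gForm (χ : ℂ^n → ℝ) {z ζ : ℂ^n} (hd : den n z ζ ≠ 0) (ℓ : FA n →ₗ[ℂ] ℂ) :
    AnalyticAt ℂ (fun w => ℓ (gForm n χ w ζ)) z := by
  have hinv : AnalyticAt ℂ (fun w => (2 * Real.pi * I * den n w ζ)⁻¹) z :=
    (analyticAt_const.mul (analyticAt_den z ζ)).inv (mul_ne_zero two_pi_I_ne_zero hd)
  simp only [gForm_eq, sDivNabla, sTerm, map_sub, Finset.mul_sum, map_sum, mul_smul_comm, map_smul,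
    smul_eq_mul]
  exact analyticAt_const.sub (Finset.analyticAt_fun_sum _ fun k _ =>
    (hinv.pow (k + 1)).mul analyticAt_const)

theorem cauchy_form_properties_general {χ : ℂ^n → ℝ} {r : ℝ} (hχsmooth : ContDiff ℝ 2 χ)
    (hχone : ∀ᶠ ζ in nhdsSet (closedBall (0 : ℂ^n) r), χ ζ = 1) (hχsupp : HasCompactSupport χ)
    {z : ℂ^n} (hz : z ∈ ball (0 : ℂ^n) r) :
    (∀ ζ : ℂ^n, r ≤ ‖ζ‖ → den n z ζ ≠ 0) ∧
    (HasCompactSupport fun ζ => gForm n χ z ζ) ∧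
    (∀ ζ : ℂ^n, den n z ζ ≠ 0 → contrEta n z ζ (sForm n z ζ) = 1) ∧
    (∀ v : ℂ^n → FA n,
      IsDbarOn n ({ζ | den n z ζ ≠ 0} ∪ interior {ζ | χ ζ = 1}) (gForm n χ z) v →
      ∀ ζ ∈ {ζ | den n z ζ ≠ 0} ∪ interior {ζ | χ ζ = 1},
        contrEta n z ζ (gForm n χ z ζ) - v ζ = 0) ∧
    (ExteriorAlgebra.algebraMapInv (gForm n χ z z) = 1) ∧
    (∀ (ζ : ℂ^n) (ℓ : FA n →ₗ[ℂ] ℂ),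
      AnalyticOnNhd ℂ (fun w => ℓ (gForm n χ w ζ)) (ball (0 : ℂ^n) r)) := by
  have hone : ∀ ζ : ℂ^n, ‖ζ‖ ≤ r → ∀ᶠ y in nhds ζ, χ y = 1 := fun ζ hζ =>
    eventually_nhdsSet_iff_forall.1 hχone ζ (mem_closedBall_zero_iff.2 hζ)
  rw [mem_ball_zero_iff] at hz
  refine ⟨fun ζ hζ => den_ne_zero_of_norm_lt (hz.trans_le hζ), hasCompactSupport_gForm hχsupp z,
    fun ζ => contrEta_sForm, fun v hv ζ hζ => ?_, ?_, fun ζ ℓ w hw => ?_⟩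
  · have hg : HasDbarAt (gForm n χ z) (contrEta n z ζ (gForm n χ z ζ)) ζ := by
      rcases hζ with hd | hint
      · exact hasDbarAt_gForm_of_den_ne_zero hχsmooth.contDiffAt hd
      · exact hasDbarAt_gForm_of_eventuallyEq_const (mem_interior_iff_mem_nhds.1 hint) z
    rw [hv.eq_of_hasDbarAt hζ hg, sub_self]
  · rw [gForm_eq_of_eventuallyEq_const (hone z hz.le), ofReal_one, one_smul, map_one]
  · rw [mem_ball_zero_iff] at hw
    rcases le_total ‖ζ‖ r with hζ | hζ
    · simp only [gForm_eq_of_eventuallyEq_const (hone ζ hζ)]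
      exact analyticAt_const
    · exact analyticAt_gForm χ (den_ne_zero_of_norm_lt (hw.trans_le hζ)) ℓ

end Forms

/-- **The properties of the Cauchy-type form `g`** (from the construction of division
formulas): for `z` in the unit ball and a cutoff `χ` which is `1` near the closed unit
ball, (i) the denominator `|ζ|² − ζ̄·z` is nonvanishing for `‖ζ‖ ≥ 1` (so `g` is
well defined on `supp ∂̄χ`); (ii) `g` has compact support in `ζ`; (iii) `δ_η s = 1`
wherever the denominator is nonvanishing; (iv) `∇_η g = δ_η g − ∂̄ g = 0` on the open
set where `g` is smooth; (v) the `(0,0)`-component of `g` at `ζ = z` equals `1`;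
(vi) `g` depends holomorphically on `z ∈ 𝔹`. -/
theorem cauchy_form_properties
    (χ : EuclideanSpace ℂ (Fin n) → ℝ)
    (hχsmooth : ContDiff ℝ (⊤ : ℕ∞) χ)
    (hχone : ∀ᶠ ζ in nhdsSet (closedBall (0 : EuclideanSpace ℂ (Fin n)) 1), χ ζ = 1)
    (hχsupp : HasCompactSupport χ)
    (z : EuclideanSpace ℂ (Fin n)) (hz : z ∈ ball (0 : EuclideanSpace ℂ (Fin n)) 1) :
    (∀ ζ : EuclideanSpace ℂ (Fin n), 1 ≤ ‖ζ‖ → den n z ζ ≠ 0) ∧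
    (HasCompactSupport fun ζ => gForm n χ z ζ) ∧
    (∀ ζ : EuclideanSpace ℂ (Fin n), den n z ζ ≠ 0 →
      contrEta n z ζ (sForm n z ζ) = 1) ∧
    (∀ v : EuclideanSpace ℂ (Fin n) → FA n,
      IsDbarOn n ({ζ | den n z ζ ≠ 0} ∪ interior {ζ | χ ζ = 1}) (gForm n χ z) v →
      ∀ ζ ∈ ({ζ | den n z ζ ≠ 0} ∪ interior {ζ | χ ζ = 1} :
          Set (EuclideanSpace ℂ (Fin n))),
        contrEta n z ζ (gForm n χ z ζ) - v ζ = 0) ∧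
    (ExteriorAlgebra.algebraMapInv (gForm n χ z z) = 1) ∧
    (∀ (ζ : EuclideanSpace ℂ (Fin n)) (ℓ : FA n →ₗ[ℂ] ℂ),
      AnalyticOnNhd ℂ (fun w => ℓ (gForm n χ w ζ))
        (ball (0 : EuclideanSpace ℂ (Fin n)) 1)) :=
  cauchy_form_properties_general (contDiff_infty.1 hχsmooth 2) hχone hχsupp hz

end
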